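/- arXiv:1904.00854 — 2 statements merged into one kernel-verified Lean document; each statement's English description precedes it below -/
import Mathlib

section
/- Let (Y,σ) be an infinite r-automatic shift generated by (θ,τ) with θ primitive. Then for every n ≥ 0, every cyclic σ^{rⁿ}-minimal partition of Y has exactly rⁿ elements; that is, γ(rⁿ) = rⁿ. -/
open scoped Classical

noncomputable section

/-- The product topology on `ℤ → A`, where the alphabet `A` carries the discrete topology. -/
abbrev seqTop (A : Type*) : TopologicalSpace (ℤ → A) :=
  @Pi.topologicalSpace ℤ (fun _ => A) (fun _ => ⊥)

/-- The left shift map `σ`. -/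
def shiftMap {A : Type*} (x : ℤ → A) : ℤ → A := fun n => x (n + 1)

/-- The shift by `m` steps, i.e. `σ ^ m`. -/
def shiftBy {A : Type*} (m : ℤ) (x : ℤ → A) : ℤ → A := fun n => x (n + m)

/-- The coordinatewise extension of a letter-to-letter map. -/
def codeMap {A B : Type*} (τ : A → B) : (ℤ → A) → (ℤ → B) := fun x n => τ (x n)

/-- The closure of the two-sided shift orbit of `x`. -/
def orbitClosure {A : Type*} (x : ℤ → A) : Set (ℤ → A) :=
  @closure _ (seqTop A) (Set.range fun m : ℤ => shiftBy m x)

/-- A subshift: a nonempty, closed, shift-invariant subset of `ℤ → A`. -/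
def IsSubshift {A : Type*} (X : Set (ℤ → A)) : Prop :=
  X.Nonempty ∧ @IsClosed _ (seqTop A) X ∧ shiftMap '' X = X

/-- A minimal subshift: every orbit is dense. -/
def IsMinimalSubshift {A : Type*} (X : Set (ℤ → A)) : Prop :=
  IsSubshift X ∧ ∀ x ∈ X, X ⊆ orbitClosure x

/-- `substPow θ r k a j` is the `(j+1)`-st letter of `θ^k(a)`, meaningful for `j < r ^ k`. -/
def substPow {A : Type*} (θ : A → ℕ → A) (r : ℕ) : ℕ → A → ℕ → A
  | 0, a, _ => a
  | k + 1, a, j => θ (substPow θ r k a (j / r)) (j % r)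

/-- A substitution of constant length `r` is primitive if for some `k ≥ 1` every letter
occurs in every `θ^k(a)`. -/
def SubstPrimitive {A : Type*} (θ : A → ℕ → A) (r : ℕ) : Prop :=
  ∃ k, 1 ≤ k ∧ ∀ a a' : A, ∃ j < r ^ k, substPow θ r k a j = a'

/-- The action of `θ^k` on bi-infinite sequences, with the image of `x₀` beginning at
coordinate `0`. -/
def substActPow {A : Type*} (θ : A → ℕ → A) (r k : ℕ) (x : ℤ → A) : ℤ → A :=
  fun n => substPow θ r k (x (Int.fdiv n (r ^ k))) ((Int.fmod n (r ^ k)).toNat)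

/-- A bi-infinite `θ`-periodic point. -/
def IsSubstPeriodicPt {A : Type*} (θ : A → ℕ → A) (r : ℕ) (x : ℤ → A) : Prop :=
  ∃ j, 1 ≤ j ∧ substActPow θ r j x = x

/-- `X` is the substitution shift `X_θ`: the orbit closure of a bi-infinite `θ`-periodic
point. -/
def IsSubstShift {A : Type*} (θ : A → ℕ → A) (r : ℕ) (X : Set (ℤ → A)) : Prop :=
  ∃ x : ℤ → A, IsSubstPeriodicPt θ r x ∧ X = orbitClosure x

/-- An automorphism of the subshift `X`: a self-homeomorphism of `X` commuting with the
shift. -/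
def IsAut {A : Type*} (X : Set (ℤ → A)) (Φ : (ℤ → A) → (ℤ → A)) : Prop :=
  Set.BijOn Φ X X ∧ @ContinuousOn _ _ (seqTop A) (seqTop A) Φ X ∧
    (∀ x ∈ X, Φ (shiftMap x) = shiftMap (Φ x)) ∧
    ∃ Ψ : (ℤ → A) → (ℤ → A), Set.MapsTo Ψ X X ∧
      @ContinuousOn _ _ (seqTop A) (seqTop A) Ψ X ∧ ∀ x ∈ X, Ψ (Φ x) = x

/-- A topological conjugacy between the subshifts `X` and `Y`. -/
def IsConjugacy {A B : Type*} (X : Set (ℤ → A)) (Y : Set (ℤ → B))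
    (h : (ℤ → A) → (ℤ → B)) : Prop :=
  Set.BijOn h X Y ∧ @ContinuousOn _ _ (seqTop A) (seqTop B) h X ∧
    (∀ x ∈ X, h (shiftMap x) = shiftMap (h x)) ∧
    ∃ g : (ℤ → B) → (ℤ → A), Set.MapsTo g Y X ∧
      @ContinuousOn _ _ (seqTop B) (seqTop A) g Y ∧ ∀ x ∈ X, g (h x) = x

/-- `X` and `Y` are topologically conjugate subshifts. -/
def TopConjugate {A B : Type*} (X : Set (ℤ → A)) (Y : Set (ℤ → B)) : Prop :=
  ∃ h, IsConjugacy X Y h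

/-- `(P, σ^n)` is a minimal system: `P` is nonempty, `σ^n`-invariant (in both directions)
and every `σ^n`-orbit is dense in `P`. -/
def MinimalUnderPow {A : Type*} (n : ℕ) (P : Set (ℤ → A)) : Prop :=
  P.Nonempty ∧ (∀ y ∈ P, ∀ m : ℤ, shiftBy ((n : ℤ) * m) y ∈ P) ∧
    ∀ y ∈ P, P ⊆ @closure _ (seqTop A) (Set.range fun m : ℤ => shiftBy ((n : ℤ) * m) y)

/-- A cyclic `σ^n`-minimal partition of `X` with `m` members. -/
def IsCyclicMinPartition {A : Type*} (X : Set (ℤ → A)) (n m : ℕ)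
    (P : ZMod m → Set (ℤ → A)) : Prop :=
  0 < m ∧ (∀ i, @IsClosed _ (seqTop A) (P i)) ∧
    (Pairwise fun i j => Disjoint (P i) (P j)) ∧ (⋃ i, P i) = X ∧
    (∀ i, shiftMap '' P i = P (i + 1)) ∧ ∀ i, MinimalUnderPow n (P i)

/-- `Φ` has `κ`-value zero: it fixes each member of every cyclic `σ^n`-minimal
partition of `X`. -/
def KappaZero {A : Type*} (X : Set (ℤ → A)) (Φ : (ℤ → A) → (ℤ → A)) : Prop :=
  ∀ n : ℕ, 1 ≤ n → ∀ m : ℕ, ∀ P : ZMod m → Set (ℤ → A),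
    IsCyclicMinPartition X n m P → ∀ i, Φ '' P i = P i

/-- `(a, b)` is a periodic pair for `θ`. -/
def IsPeriodicPair {A : Type*} (θ : A → ℕ → A) (r : ℕ) (a b : A) : Prop :=
  a ≠ b ∧ ∃ p, 1 ≤ p ∧ ∃ j < r ^ p, substPow θ r p a j = a ∧ substPow θ r p b j = b

/-- The least period `p(a,b)` of a periodic pair. -/
def pairPeriod {A : Type*} (θ : A → ℕ → A) (r : ℕ) (a b : A) : ℕ :=
  sInf {p | 1 ≤ p ∧ ∃ j < r ^ p, substPow θ r p a j = a ∧ substPow θ r p b j = b}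

/-- `p(θ)`: the least common multiple of the periods of the periodic pairs of `θ`
(equal to `1` if there are none). -/
def substPairLcm {A : Type*} [Fintype A] (θ : A → ℕ → A) (r : ℕ) : ℕ :=
  Finset.univ.lcm fun ab : A × A =>
    if IsPeriodicPair θ r ab.1 ab.2 then pairPeriod θ r ab.1 ab.2 else 1

/-- `θ` is pair-aperiodic: every periodic pair has period `1`. -/
def PairAperiodic {A : Type*} (θ : A → ℕ → A) (r : ℕ) : Prop :=
  ∀ a b : A, IsPeriodicPair θ r a b → ∃ j < r, θ a j = a ∧ θ b j = b

/-- `(c, d)` is `k`-reachable from `(a, b)`. -/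
def PairReachable {A : Type*} (θ : A → ℕ → A) (r k : ℕ) (a b c d : A) : Prop :=
  ∃ j < r ^ k, substPow θ r k a j = c ∧ substPow θ r k b j = d

/-- `(a, b)` is an asymptotic disjoint pair. -/
def AsympDisjointPair {A : Type*} (θ : A → ℕ → A) (r : ℕ) (a b : A) : Prop :=
  ∀ k, 1 ≤ k → ∃ j < r ^ k, substPow θ r k a j ≠ substPow θ r k b j

/-- A right-infinite fixed point of `θ`. -/
def IsRightFixed {A : Type*} (θ : A → ℕ → A) (r : ℕ) (u : ℕ → A) : Prop :=
  ∀ n : ℕ, θ (u (n / r)) (n % r) = u n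

/-- A left-infinite fixed point of `θ` (only coordinates `< 0` are meaningful). -/
def IsLeftFixed {A : Type*} (θ : A → ℕ → A) (r : ℕ) (v : ℤ → A) : Prop :=
  ∀ m : ℤ, m < 0 → θ (v (Int.fdiv m r)) ((Int.fmod m r).toNat) = v m

/-- `θ` is injective: distinct letters have distinct images. -/
def SubstInjective {A : Type*} (θ : A → ℕ → A) (r : ℕ) : Prop :=
  ∀ a b : A, (∀ j < r, θ a j = θ b j) → a = b

/-- `θ` is strongly injective: injective, no two distinct right-infinite fixed points agree
on all coordinates `n ≥ 1`, and no two distinct left-infinite fixed points agree on all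
coordinates `n ≤ -2`. -/
def StronglyInjective {A : Type*} (θ : A → ℕ → A) (r : ℕ) : Prop :=
  SubstInjective θ r ∧
    (∀ u u' : ℕ → A, IsRightFixed θ r u → IsRightFixed θ r u' →
      (∀ n, 1 ≤ n → u n = u' n) → u = u') ∧
    (∀ v v' : ℤ → A, IsLeftFixed θ r v → IsLeftFixed θ r v' →
      (∀ m : ℤ, m ≤ -2 → v m = v' m) → ∀ m : ℤ, m < 0 → v m = v' m)

/-- `θ` has height one. -/
def HeightOne {A : Type*} (θ : A → ℕ → A) (r : ℕ) : Prop :=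
  ∀ u : ℕ → A, IsRightFixed θ r u →
    ∀ n, 1 ≤ n → Nat.Coprime n r → (∀ a, 1 ≤ a → u a = u 0 → n ∣ a) → n = 1

/-- The column number `c(θ)`. -/
def columnNumber {A : Type*} [Fintype A] (θ : A → ℕ → A) (r : ℕ) : ℕ :=
  sInf {c | ∃ k, 1 ≤ k ∧ ∃ j < r ^ k,
    c = (Set.range fun a : A => substPow θ r k a j).ncard}

/-- A minimal set for `θ`: a column image of cardinality `c(θ)`. -/
def IsMinimalSet {A : Type*} [Fintype A] (θ : A → ℕ → A) (r : ℕ) (M : Set A) : Prop :=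
  M.ncard = columnNumber θ r ∧
    ∃ k, 1 ≤ k ∧ ∃ j < r ^ k, M = Set.range fun a : A => substPow θ r k a j

/-- `d*(θ^k(a), θ^k(b))`: the proportion of coordinates where `θ^k(a)` and `θ^k(b)`
disagree. -/
def dStar {A : Type*} (θ : A → ℕ → A) (r k : ℕ) (a b : A) : ℝ :=
  (((Finset.range (r ^ k)).filter
      fun j => substPow θ r k a j ≠ substPow θ r k b j).card : ℝ) / ((r : ℝ) ^ k)

/-- `θ` is reduced: for no pair of distinct letters does `d*(θ^k(a), θ^k(b))` tend to `0`. -/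
def SubstReduced {A : Type*} (θ : A → ℕ → A) (r : ℕ) : Prop :=
  ∀ a b : A, a ≠ b →
    ¬ Filter.Tendsto (fun k => dStar θ r k a b) Filter.atTop (nhds (0 : ℝ))

/-- `ι : C → (ℕ → B)` presents `C` as the alphabet of `k`-blocks of the fixed point `u`
of `η`, and `ηk` as the `k`-compression `η^{(k)}` of `η`. -/
def IsCompression {B C : Type*} (η : B → ℕ → B) (r k : ℕ) (u : ℕ → B)
    (ι : C → ℕ → B) (ηk : C → ℕ → C) : Prop :=
  IsRightFixed η r u ∧
    (∀ c c' : C, (∀ j < k, ι c j = ι c' j) → c = c') ∧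
    (∀ c : C, ∃ m : ℕ, ∀ j < k, ι c j = u (m * k + j)) ∧
    (∀ m : ℕ, ∃ c : C, ∀ j < k, ι c j = u (m * k + j)) ∧
    (∀ c : C, ∀ i < r, ∀ j < k,
      ι (ηk c i) j = η (ι c ((i * k + j) / r)) ((i * k + j) % r))

/-- The `τ`-twist of a substitution: `(θ_τ(α))_j = τ^j(θ(α)_j)`. -/
def twistSubst {C : Type*} (θ : C → ℕ → C) (τ : C → C) : C → ℕ → C :=
  fun c j => τ^[j] (θ c j)

end

/-!
Let `X_θ` be the orbit closure of the `θ`-periodic point `x`, let `Y = τ(X_θ)`, and choose a large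
`k` with `θ^k(x) = x`. A `σ^(r^k)`-minimal subset `W` of `τ(θ^k(X_θ)) ⊆ Y` is a block for the
shift action of `ℤ`, its stabilizer has some index `g ∣ r^k`, and its `g` translates cover `Y`. In
a fixed translate of `W` a word of length `r^k` is determined by two letters of the alphabet `A` of
`θ`, so `Y` has at most `g · |A|²` words of length `r^k`. By Morse–Hedlund the infinite shift `Y`
has more than `r^k` of them, so `r^k / g` stays bounded by `|A|²` while `k` grows; this forces
`r^n ∣ g`.

For a cyclic `σ^(r^n)`-minimal partition with members `P_i`, `i ∈ ℤ/m`, the stabilizer of `P_0` is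
`mℤ`. It contains `r^n ℤ`, as `P_0` is invariant under `σ^(r^n)`. Conversely, `P_0` lies in one
translate of the union of the `σ^(r^n)`-orbit of `W`, and since the stabilizer `gℤ` of `W` lies in
`r^n ℤ`, so does that of `P_0`.
-/

open scoped Pointwise

/-! ### Arithmetic of ℤ and its subgroups -/

section Arithmetic

theorem add_ediv_eq_or_eq_add_one {R i : ℤ} (hi : 0 ≤ i) (hiR : i < R) (d : ℤ) :
    (i + d) / R = d / R ∨ (i + d) / R = d / R + 1 := by
  have hR : 0 < R := hi.trans_lt hiR
  have hdiv : (i + d) / R = (i + d % R) / R + d / R := by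
    rw [← Int.add_mul_ediv_left _ _ hR.ne', add_assoc, Int.emod_add_mul_ediv]
  have hnonneg : 0 ≤ (i + d % R) / R :=
    Int.ediv_nonneg (add_nonneg hi (Int.emod_nonneg d hR.ne')) hR.le
  have hlt : (i + d % R) / R < 2 :=
    Int.ediv_lt_of_lt_mul hR (by linarith [Int.emod_lt_of_pos d hR])
  omega

theorem dvd_pow_self_of_dvd_pow {q r k : ℕ} (hr : 0 < r) (hq : q ∣ r ^ k) : q ∣ r ^ q := by
  have hq0 : q ≠ 0 := ne_zero_of_dvd_ne_zero (by positivity) hq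
  refine (Nat.factorization_prime_le_iff_dvd hq0 (by positivity)).1 fun p _ => ?_
  have hle := (Nat.factorization_le_iff_dvd hq0 (by positivity)).2 hq p
  rw [Nat.factorization_pow, Finsupp.smul_apply, smul_eq_mul] at hle ⊢
  rcases Nat.eq_zero_or_pos (r.factorization p) with hp | hp
  · simpa [hp] using hle
  · exact (Nat.factorization_lt p hq0).le.trans (Nat.le_mul_of_pos_right q hp)

theorem pow_dvd_of_pow_lt_mul {r g n k c : ℕ} (hr : 0 < r) (hg : g ∣ r ^ k) (hlt : r ^ k < g * c)
    (hk : n + c ≤ k) : r ^ n ∣ g := by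
  obtain ⟨q, hq⟩ := hg
  have hqc : q < c := lt_of_mul_lt_mul_left (hq ▸ hlt) (Nat.zero_le g)
  have hq0 : 0 < q := Nat.pos_of_ne_zero (by rintro rfl; exact (pow_pos hr k).ne' hq)
  have hdvd : q ∣ r ^ c :=
    (dvd_pow_self_of_dvd_pow hr (Dvd.intro_left g hq.symm)).trans (pow_dvd_pow r hqc.le)
  refine Nat.dvd_of_mul_dvd_mul_right hq0 ?_
  calc r ^ n * q ∣ r ^ n * r ^ c := mul_dvd_mul_left _ hdvd
    _ = r ^ (n + c) := (pow_add r n c).symm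
    _ ∣ r ^ k := pow_dvd_pow r hk
    _ = g * q := hq

theorem le_zmultiples_of_dvd_index {H : AddSubgroup ℤ} {d : ℕ} (hd : d ∣ H.index) :
    H ≤ AddSubgroup.zmultiples (d : ℤ) := by
  obtain ⟨a, rfl⟩ := Int.subgroup_cyclic H
  rw [← AddSubgroup.zmultiples_eq_closure] at hd ⊢
  rw [Int.index_zmultiples] at hd
  exact AddSubgroup.zmultiples_le_of_mem (Int.mem_zmultiples_iff.2 (Int.natCast_dvd.2 hd))

theorem zmultiples_natCast_le_zmultiples_natCast_iff {a b : ℕ} :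
    AddSubgroup.zmultiples (a : ℤ) ≤ AddSubgroup.zmultiples (b : ℤ) ↔ b ∣ a := by
  rw [AddSubgroup.zmultiples_le, Int.mem_zmultiples_iff, Int.natCast_dvd_natCast]

end Arithmetic

/-! ### Minimal sets of a group action -/

section Dynamics

variable {G α : Type*} [AddGroup G] [AddAction G α] [TopologicalSpace α]
  {H : AddSubgroup G} {K V W Y : Set α}

/-- A nonempty closed set invariant under the subgroup `H` of the acting group. The `H`-minimal
sets of topological dynamics are the inclusion-minimal ones, `Minimal (IsClosedInvariant H)`. -/
structure IsClosedInvariant (H : AddSubgroup G) (V : Set α) : Prop where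
  nonempty : V.Nonempty
  isClosed : IsClosed V
  vadd_mem : ∀ h ∈ H, ∀ v ∈ V, h +ᵥ v ∈ V

theorem IsClosedInvariant.mono {H' : AddSubgroup G} (hV : IsClosedInvariant H V) (hle : H' ≤ H) :
    IsClosedInvariant H' V :=
  ⟨hV.nonempty, hV.isClosed, fun h hh => hV.vadd_mem h (hle hh)⟩

theorem IsClosedInvariant.le_stabilizer (hV : IsClosedInvariant H V) :
    H ≤ AddAction.stabilizer G V := by
  intro h hh
  refine AddAction.mem_stabilizer_iff.2 (Set.Subset.antisymm ?_ fun v hv => ?_)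
  · rintro _ ⟨v, hv, rfl⟩
    exact hV.vadd_mem h hh v hv
  · exact Set.mem_vadd_set_iff_neg_vadd_mem.2 (hV.vadd_mem (-h) (neg_mem hh) v hv)

theorem isClosedInvariant_sInter_of_isChain {c : Set (Set α)} (hne : c.Nonempty)
    (hchain : IsChain (· ⊆ ·) c) (hc : ∀ V ∈ c, IsClosedInvariant H V)
    (hcompact : ∀ V ∈ c, IsCompact V) : IsClosedInvariant H (⋂₀ c) := by
  have : Nonempty c := hne.to_subtype
  have hchain' : IsChain (· ⊇ ·) c := hchain.symm
  exact ⟨IsCompact.nonempty_sInter_of_directed_nonempty_isCompact_isClosed hchain'.directedOn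
      (fun V hV => (hc V hV).nonempty) hcompact (fun V hV => (hc V hV).isClosed),
    isClosed_sInter fun V hV => (hc V hV).isClosed,
    fun h hh v hv V hV => (hc V hV).vadd_mem h hh v (hv V hV)⟩

theorem IsClosedInvariant.exists_minimal_subset (hK : IsClosedInvariant H K)
    (hKc : IsCompact K) : ∃ W ⊆ K, Minimal (IsClosedInvariant H) W := by
  obtain ⟨W, hWK, hW⟩ := zorn_superset_nonempty {V | IsClosedInvariant H V ∧ V ⊆ K}
    (fun c hc hchain hne => by
      obtain ⟨V, hV⟩ := hne
      have hinter := isClosedInvariant_sInter_of_isChain ⟨V, hV⟩ hchain (fun U hU => (hc hU).1)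
        fun U hU => hKc.of_isClosed_subset (hc hU).1.isClosed (hc hU).2
      exact ⟨⋂₀ c, ⟨hinter, (Set.sInter_subset_of_mem hV).trans (hc hV).2⟩,
        fun U hU => Set.sInter_subset_of_mem hU⟩)
    K ⟨hK, subset_rfl⟩
  exact ⟨W, hWK, hW.prop.1, fun V hV hVW => hW.le_of_le ⟨hV, hVW.trans hWK⟩ hVW⟩

theorem subset_of_minimal_of_inter_nonempty (hW : Minimal (IsClosedInvariant H) W)
    (hV : IsClosedInvariant H V) (hWV : (W ∩ V).Nonempty) : W ⊆ V := by
  have hinter : IsClosedInvariant H (W ∩ V) :=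
    ⟨hWV, hW.prop.isClosed.inter hV.isClosed, fun h hh v hv =>
      ⟨hW.prop.vadd_mem h hh v hv.1, hV.vadd_mem h hh v hv.2⟩⟩
  exact (hW.le_of_le hinter Set.inter_subset_left).trans Set.inter_subset_right

theorem isClosed_set_vadd_of_finite_orbit [ContinuousConstVAdd G α] (hW : IsClosed W)
    (hfin : (AddAction.orbit G W).Finite) (S : Set G) : IsClosed (S +ᵥ W) := by
  have himage : S +ᵥ W = ⋃ U ∈ (· +ᵥ W) '' S, U := by
    rw [Set.biUnion_image, Set.iUnion_vadd_set]
  rw [himage]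
  refine (hfin.subset (Set.image_subset_range _ _)).isClosed_biUnion ?_
  rintro _ ⟨g, -, rfl⟩
  exact hW.vadd g

theorem univ_vadd_eq_of_minimal [ContinuousConstVAdd G α]
    (hY : Minimal (IsClosedInvariant (⊤ : AddSubgroup G)) Y) (hWY : W ⊆ Y) (hW : IsClosed W)
    (hWne : W.Nonempty) (hfin : (AddAction.orbit G W).Finite) :
    (Set.univ : Set G) +ᵥ W = Y := by
  have hsub : W ⊆ (Set.univ : Set G) +ᵥ W := fun w hw =>
    ⟨0, Set.mem_univ 0, w, hw, zero_vadd G w⟩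
  have hinv : IsClosedInvariant (⊤ : AddSubgroup G) ((Set.univ : Set G) +ᵥ W) := by
    refine ⟨hWne.mono hsub, isClosed_set_vadd_of_finite_orbit hW hfin _, ?_⟩
    rintro h - _ ⟨g, -, w, hw, rfl⟩
    exact ⟨h + g, Set.mem_univ _, w, hw, add_vadd h g w⟩
  refine Set.Subset.antisymm ?_ (subset_of_minimal_of_inter_nonempty hY hinv ?_)
  · rintro _ ⟨g, -, w, hw, rfl⟩
    exact hY.prop.vadd_mem g (AddSubgroup.mem_top g) w (hWY hw)
  · exact hWne.mono fun w hw => ⟨hWY hw, hsub hw⟩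

end Dynamics

section CommutativeDynamics

variable {G α : Type*} [AddCommGroup G] [AddAction G α] [TopologicalSpace α]
  [ContinuousConstVAdd G α] {H N : AddSubgroup G} {P V W : Set α}

theorem IsClosedInvariant.vadd (hV : IsClosedInvariant H V) (g : G) :
    IsClosedInvariant H (g +ᵥ V) := by
  refine ⟨hV.nonempty.vadd_set, hV.isClosed.vadd g, ?_⟩
  rintro h hh _ ⟨v, hv, rfl⟩
  exact ⟨h +ᵥ v, hV.vadd_mem h hh v hv, vadd_comm g h v⟩

theorem isBlock_of_minimal (hW : Minimal (IsClosedInvariant H) W) : AddAction.IsBlock G W := by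
  refine AddAction.isBlock_iff_vadd_eq_of_nonempty.2 fun g hg => Set.Subset.antisymm ?_ ?_
  · have hneg : (W ∩ (-g +ᵥ W)).Nonempty := by
      simpa [Set.vadd_set_inter] using hg.vadd_set (a := -g)
    have := subset_of_minimal_of_inter_nonempty hW (hW.prop.vadd (-g)) hneg
    rwa [Set.subset_vadd_set_iff, neg_neg] at this
  · exact subset_of_minimal_of_inter_nonempty hW (hW.prop.vadd g) (Set.inter_comm _ _ ▸ hg)

/-- `N +ᵥ W` is a closed `N`-invariant block with stabilizer `N`, and an `N`-minimal set meeting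
one of its translates stays inside that translate. -/
theorem stabilizer_le_of_minimal_of_isBlock (hP : Minimal (IsClosedInvariant N) P)
    (hW : IsClosed W) (hblock : AddAction.IsBlock G W) (hfin : (AddAction.orbit G W).Finite)
    (hstab : AddAction.stabilizer G W ≤ N) (hPW : P ⊆ (Set.univ : Set G) +ᵥ W) :
    AddAction.stabilizer G P ≤ N := by
  intro m hm
  obtain ⟨p, hp⟩ := hP.prop.nonempty
  obtain ⟨g, -, w, hw, rfl⟩ := hPW hp
  have hsat : IsClosedInvariant N ((N : Set G) +ᵥ W) := by
    refine ⟨⟨w, 0, N.zero_mem, w, hw, zero_vadd G w⟩,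
      isClosed_set_vadd_of_finite_orbit hW hfin _, ?_⟩
    rintro h hh _ ⟨d, hd, v, hv, rfl⟩
    exact ⟨h + d, N.add_mem hh hd, v, hv, add_vadd h d v⟩
  have hPsat : P ⊆ g +ᵥ ((N : Set G) +ᵥ W) :=
    subset_of_minimal_of_inter_nonempty hP (hsat.vadd g)
      ⟨_, hp, Set.vadd_mem_vadd_set ⟨0, N.zero_mem, w, hw, zero_vadd G w⟩⟩
  have hmp : m +ᵥ (g +ᵥ w) ∈ P := by
    rw [← AddAction.mem_stabilizer_iff.1 hm]
    exact Set.vadd_mem_vadd_set hp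
  obtain ⟨_, ⟨d, hd, v, hv, rfl⟩, heq⟩ := hPsat hmp
  have hvw : d +ᵥ v = m +ᵥ w := by
    rw [vadd_comm m g w] at heq
    exact AddAction.injective g heq
  have htranslates : d +ᵥ W = m +ᵥ W :=
    AddAction.isBlock_iff_vadd_eq_vadd_of_nonempty.1 hblock
      ⟨d +ᵥ v, Set.vadd_mem_vadd_set hv, hvw ▸ Set.vadd_mem_vadd_set hw⟩
  have hdiff : -d + m ∈ AddAction.stabilizer G W := by
    rw [AddAction.mem_stabilizer_iff, add_vadd, ← htranslates, neg_vadd_vadd]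
  simpa using N.add_mem hd (hstab hdiff)

end CommutativeDynamics

section Shift

variable {A B : Type*}

/-- The action of `ℤ` on bi-infinite sequences by powers of the shift. -/
abbrev shiftAction (A : Type*) : AddAction ℤ (ℤ → A) where
  vadd := shiftBy
  zero_vadd x := funext fun n => congrArg x (add_zero n)
  add_vadd a b x := funext fun n => congrArg x (by ring)

attribute [local instance] seqTop shiftAction

theorem int_vadd_apply (a : ℤ) (x : ℤ → A) (n : ℤ) : (a +ᵥ x) n = x (n + a) := rfl

instance : ContinuousConstVAdd ℤ (ℤ → A) :=
  let _ : TopologicalSpace A := ⊥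
  ⟨fun a => continuous_pi fun n => continuous_apply (n + a)⟩

/-! ### The Morse–Hedlund bound -/

/-- The word of length `L` occurring in `y` at coordinates `0, …, L - 1`. -/
def initialWord (L : ℕ) (y : ℤ → B) : Fin L → B := fun i => y i

/-- The words of length `L` occurring at coordinate `0` in the points of `Y`; when `Y` is
shift-invariant these are all its words of length `L`. -/
def words (L : ℕ) (Y : Set (ℤ → B)) : Set (Fin L → B) := initialWord L '' Y

theorem init_initialWord (L : ℕ) (y : ℤ → B) :
    Fin.init (initialWord (L + 1) y) = initialWord L y := rfl

theorem tail_initialWord (L : ℕ) (y : ℤ → B) :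
    Fin.tail (initialWord (L + 1) y) = initialWord L ((1 : ℤ) +ᵥ y) := by
  funext i
  simp [Fin.tail, initialWord, int_vadd_apply]

theorem image_init_words (L : ℕ) (Y : Set (ℤ → B)) :
    Fin.init '' words (L + 1) Y = words L Y := by
  simp only [words, Set.image_image, init_initialWord]

theorem image_tail_words (L : ℕ) {Y : Set (ℤ → B)} (hY : ∀ t : ℤ, t +ᵥ Y = Y) :
    Fin.tail '' words (L + 1) Y = words L Y := by
  simp only [words, Set.image_image, tail_initialWord]
  conv_rhs => rw [← hY 1, ← Set.image_vadd, Set.image_image]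

theorem eq_of_initialWord_eq {L : ℕ} {Y : Set (ℤ → B)} (hY : ∀ t : ℤ, t +ᵥ Y = Y)
    (hinit : Set.InjOn Fin.init (words (L + 1) Y)) (htail : Set.InjOn Fin.tail (words (L + 1) Y))
    {y z : ℤ → B} (hy : y ∈ Y) (hz : z ∈ Y) (hyz : initialWord L y = initialWord L z) : y = z := by
  have hmem (t : ℤ) {y : ℤ → B} (hy : y ∈ Y) : initialWord (L + 1) (t +ᵥ y) ∈ words (L + 1) Y :=
    ⟨_, hY t ▸ Set.vadd_mem_vadd_set hy, rfl⟩
  have hword (t : ℤ) : initialWord (L + 1) (t +ᵥ y) = initialWord (L + 1) (t +ᵥ z) := by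
    induction t using Int.induction_on with
    | zero => exact hinit (hmem 0 hy) (hmem 0 hz) (by simpa [init_initialWord] using hyz)
    | succ k ih =>
      refine hinit (hmem _ hy) (hmem _ hz) ?_
      have := congrArg Fin.tail ih
      simpa only [init_initialWord, tail_initialWord, ← add_vadd, add_comm (1 : ℤ)] using this
    | pred k ih =>
      refine htail (hmem _ hy) (hmem _ hz) ?_
      have := congrArg Fin.init ih
      simpa only [init_initialWord, tail_initialWord, ← add_vadd, add_sub_cancel] using this
  funext t
  simpa [initialWord, int_vadd_apply] using congrFun (hword t) 0

theorem encard_words_lt_encard_words_succ {Y : Set (ℤ → B)} (hY : ∀ t : ℤ, t +ᵥ Y = Y)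
    (hinf : Y.Infinite) {L : ℕ} (hfin : (words (L + 1) Y).Finite) :
    (words L Y).encard < (words (L + 1) Y).encard := by
  refine lt_of_le_of_ne (image_init_words L Y ▸ Set.encard_image_le _ _) fun heq => hinf ?_
  have hinit : Set.InjOn Fin.init (words (L + 1) Y) :=
    hfin.injOn_of_encard_image_eq (by rw [image_init_words, heq])
  have htail : Set.InjOn Fin.tail (words (L + 1) Y) :=
    hfin.injOn_of_encard_image_eq (by rw [image_tail_words L hY, heq])
  have hwords : (words L Y).Finite := image_init_words L Y ▸ hfin.image _
  exact hwords.of_finite_image fun y hy z hz hyz => eq_of_initialWord_eq hY hinit htail hy hz hyz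

theorem natCast_lt_encard_words {Y : Set (ℤ → B)} (hY : ∀ t : ℤ, t +ᵥ Y = Y) (hinf : Y.Infinite)
    (L : ℕ) : (L : ℕ∞) < (words L Y).encard := by
  induction L with
  | zero => simpa [words] using hinf.nonempty
  | succ L ih =>
    by_cases hfin : (words (L + 1) Y).Finite
    · calc ((L + 1 : ℕ) : ℕ∞) ≤ (words L Y).encard := by
            simpa using Order.add_one_le_of_lt ih
        _ < (words (L + 1) Y).encard := encard_words_lt_encard_words_succ hY hinf hfin
    · rw [Set.Infinite.encard_eq hfin]
      exact ENat.natCast_lt_top _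

/-! ### Substitutions of constant length -/

theorem substActPow_apply (θ : A → ℕ → A) (r k : ℕ) (x : ℤ → A) (n : ℤ) :
    substActPow θ r k x n = substPow θ r k (x (n / (r ^ k : ℕ))) (n % (r ^ k : ℕ)).toNat := by
  have hnonneg : (0 : ℤ) ≤ (r : ℤ) ^ k := by positivity
  simp only [substActPow, Int.fdiv_eq_ediv_of_nonneg _ hnonneg,
    Int.fmod_eq_emod_of_nonneg _ hnonneg, Nat.cast_pow]

theorem substActPow_vadd {θ : A → ℕ → A} {r : ℕ} (hr : 0 < r) (k : ℕ) (t : ℤ) (x : ℤ → A) :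
    substActPow θ r k (t +ᵥ x) = ((r ^ k : ℕ) * t : ℤ) +ᵥ substActPow θ r k x := by
  have hpow : ((r ^ k : ℕ) : ℤ) ≠ 0 := by positivity
  funext n
  simp only [int_vadd_apply, substActPow_apply, Int.add_mul_ediv_left _ _ hpow,
    Int.add_mul_emod_self_left]

theorem substActPow_succ (θ : A → ℕ → A) {r : ℕ} (hr : 0 < r) (k : ℕ) (x : ℤ → A) :
    substActPow θ r (k + 1) x = substActPow θ r 1 (substActPow θ r k x) := by
  funext n
  obtain ⟨N, hN⟩ : ∃ N : ℕ, (N : ℤ) = n % (r ^ (k + 1) : ℕ) :=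
    Int.eq_ofNat_of_zero_le (Int.emod_nonneg n (by positivity)) |>.imp fun _ h => h.symm
  have hdiv : n / (r ^ (k + 1) : ℕ) = n / r / (r ^ k : ℕ) := by
    rw [pow_succ', Nat.cast_mul, Int.ediv_ediv_of_nonneg (by positivity)]
  have hn : n = N + r * ((r ^ k : ℕ) * (n / r / (r ^ k : ℕ))) := by
    rw [← hdiv, hN, ← mul_assoc, ← Nat.cast_mul, ← pow_succ', Int.emod_add_mul_ediv]
  have hquot : (n / r % (r ^ k : ℕ)).toNat = N / r := by
    have hlt : N / r < r ^ k := Nat.div_lt_of_lt_mul (by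
      zify; rw [hN, ← pow_succ']; exact_mod_cast Int.emod_lt_of_pos n (by positivity))
    rw [hn, Int.add_mul_ediv_left _ _ (by positivity), Int.add_mul_emod_self_left]
    exact_mod_cast Nat.mod_eq_of_lt hlt
  have hrem : (n % r).toNat = N % r := by
    rw [hn, Int.add_mul_emod_self_left]
    norm_cast
  simp only [substActPow_apply, hdiv, ← hN, Int.toNat_natCast, pow_one, substPow, hquot, hrem,
    Nat.mod_mod]

theorem substActPow_eq_iterate (θ : A → ℕ → A) {r : ℕ} (hr : 0 < r) (k : ℕ) :
    substActPow θ r k = (substActPow θ r 1)^[k] := by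
  funext x
  induction k with
  | zero => funext n; simp [substActPow_apply, substPow]
  | succ k ih => rw [substActPow_succ θ hr, ih, Function.iterate_succ_apply']

theorem IsSubstPeriodicPt.exists_le {θ : A → ℕ → A} {r : ℕ} (hr : 0 < r) {x : ℤ → A}
    (hx : IsSubstPeriodicPt θ r x) (l : ℕ) : ∃ k, l ≤ k ∧ substActPow θ r k x = x := by
  obtain ⟨j, hj, hxj⟩ := hx
  refine ⟨j * l, Nat.le_mul_of_pos_left l hj, ?_⟩
  rw [substActPow_eq_iterate θ hr, Function.iterate_mul, ← substActPow_eq_iterate θ hr]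
  exact Function.IsFixedPt.iterate hxj l

theorem continuous_substActPow (θ : A → ℕ → A) (r k : ℕ) : Continuous (substActPow θ r k) :=
  let _ : TopologicalSpace A := ⊥
  continuous_pi fun n => (continuous_bot
    (f := fun a => substPow θ r k a (n.fmod (r ^ k)).toNat)).comp (continuous_apply _)

theorem continuous_codeMap (τ : A → B) : Continuous (codeMap τ) :=
  let _ : TopologicalSpace A := ⊥
  let _ : TopologicalSpace B := ⊥
  continuous_pi fun _ => continuous_bot.comp (continuous_apply _)

theorem codeMap_vadd (τ : A → B) (t : ℤ) (x : ℤ → A) : codeMap τ (t +ᵥ x) = t +ᵥ codeMap τ x :=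
  rfl

theorem isClosedInvariant_orbitClosure (x : ℤ → A) :
    IsClosedInvariant (⊤ : AddSubgroup ℤ) (orbitClosure x) where
  nonempty := (Set.range_nonempty fun t : ℤ => t +ᵥ x).closure
  isClosed := isClosed_closure
  vadd_mem t _ y hy := by
    refine map_mem_closure (continuous_const_vadd t) hy ?_
    rintro _ ⟨s, rfl⟩
    exact ⟨t + s, add_vadd t s x⟩

theorem mapsTo_substActPow_orbitClosure {θ : A → ℕ → A} {r k : ℕ} {x : ℤ → A} (hr : 0 < r)
    (hx : substActPow θ r k x = x) :
    Set.MapsTo (substActPow θ r k) (orbitClosure x) (orbitClosure x) := by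
  refine Set.MapsTo.closure ?_ (continuous_substActPow θ r k)
  rintro _ ⟨t, rfl⟩
  have himage := substActPow_vadd (θ := θ) hr k t x
  rw [hx] at himage
  exact ⟨(r ^ k : ℕ) * t, himage.symm⟩

theorem isCompact_image_codeMap_substActPow [Finite A] (θ : A → ℕ → A) (r : ℕ) (τ : A → B) (k : ℕ)
    {X : Set (ℤ → A)} (hX : IsClosed X) : IsCompact (codeMap τ '' (substActPow θ r k '' X)) :=
  let _ : TopologicalSpace A := ⊥
  (hX.isCompact.image (continuous_substActPow θ r k)).image (continuous_codeMap τ)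

theorem isClosedInvariant_image_codeMap_substActPow [Finite A] (θ : A → ℕ → A) {r : ℕ} (hr : 0 < r)
    (τ : A → B) (k : ℕ) {X : Set (ℤ → A)} (hX : IsClosedInvariant (⊤ : AddSubgroup ℤ) X) :
    IsClosedInvariant (AddSubgroup.zmultiples ((r ^ k : ℕ) : ℤ))
      (codeMap τ '' (substActPow θ r k '' X)) := by
  let _ : TopologicalSpace B := ⊥
  have : DiscreteTopology B := ⟨rfl⟩
  refine ⟨(hX.nonempty.image _).image _,
    (isCompact_image_codeMap_substActPow θ r τ k hX.isClosed).isClosed, ?_⟩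
  rintro _ ⟨t, rfl⟩ _ ⟨_, ⟨x, hx, rfl⟩, rfl⟩
  refine ⟨_, ⟨t +ᵥ x, hX.vadd_mem t (AddSubgroup.mem_top t) x hx, substActPow_vadd hr k t x⟩, ?_⟩
  simp only [codeMap_vadd, smul_eq_mul, mul_comm]

/-- A word of length `r ^ k` meets at most two consecutive blocks `θ ^ k (a)`, and `d` fixes where
they are cut. -/
theorem encard_words_vadd_image_substActPow_le (θ : A → ℕ → A) (r : ℕ) (τ : A → B)
    (k : ℕ) (X : Set (ℤ → A)) (d : ℤ) :
    (words (r ^ k) (d +ᵥ codeMap τ '' (substActPow θ r k '' X))).encard ≤ ENat.card A ^ 2 := by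
  let twoBlockWord (ab : A × A) (i : Fin (r ^ k)) : B :=
    τ (substPow θ r k (if (i + d) / (r ^ k : ℕ) = d / (r ^ k : ℕ) then ab.1 else ab.2)
      ((i + d) % (r ^ k : ℕ)).toNat)
  have hsub : words (r ^ k) (d +ᵥ codeMap τ '' (substActPow θ r k '' X)) ⊆
      Set.range twoBlockWord := by
    rintro _ ⟨_, ⟨_, ⟨_, ⟨x, -, rfl⟩, rfl⟩, rfl⟩, rfl⟩
    refine ⟨(x (d / (r ^ k : ℕ)), x (d / (r ^ k : ℕ) + 1)), funext fun i => ?_⟩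
    simp only [twoBlockWord, initialWord, int_vadd_apply, codeMap, substActPow_apply]
    rcases add_ediv_eq_or_eq_add_one (Int.natCast_nonneg i) (Nat.cast_lt.2 i.isLt) d with h | h
    · rw [h, if_pos rfl]
    · rw [h, if_neg (by omega)]
  calc _ ≤ (Set.range twoBlockWord).encard := Set.encard_le_encard hsub
    _ ≤ (Set.univ : Set (A × A)).encard := by
      rw [← Set.image_univ]; exact Set.encard_image_le _ _
    _ = ENat.card A ^ 2 := by rw [Set.encard_univ, ENat.card_prod, sq]

theorem encard_words_univ_vadd_le {W : Set (ℤ → B)} (hfin : (AddAction.orbit ℤ W).Finite)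
    {L : ℕ} {c : ℕ∞} (hW : ∀ d : ℤ, (words L (d +ᵥ W)).encard ≤ c) :
    (words L ((Set.univ : Set ℤ) +ᵥ W)).encard ≤ (AddAction.stabilizer ℤ W).index * c := by
  have hsub : words L ((Set.univ : Set ℤ) +ᵥ W) ⊆ ⋃ U ∈ hfin.toFinset, words L U := by
    rintro _ ⟨_, ⟨d, -, w, hw, rfl⟩, rfl⟩
    exact Set.mem_biUnion (hfin.mem_toFinset.2 ⟨d, rfl⟩) ⟨_, Set.vadd_mem_vadd_set hw, rfl⟩
  calc _ ≤ ∑ U ∈ hfin.toFinset, (words L U).encard :=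
        (Set.encard_le_encard hsub).trans (hfin.toFinset.set_encard_biUnion_le _)
    _ ≤ hfin.toFinset.card • c := by
      refine Finset.sum_le_card_nsmul _ _ _ fun U hU => ?_
      obtain ⟨d, rfl⟩ := hfin.mem_toFinset.1 hU
      exact hW d
    _ = (AddAction.stabilizer ℤ W).index * c := by
      rw [AddAction.index_stabilizer, Set.ncard_eq_toFinset_card _ hfin, nsmul_eq_mul]

theorem pow_lt_index_stabilizer_mul_card_sq [Finite A] {θ : A → ℕ → A} {r k : ℕ} {τ : A → B}
    {X : Set (ℤ → A)} {W : Set (ℤ → B)} (hW : W ⊆ codeMap τ '' (substActPow θ r k '' X))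
    (hfin : (AddAction.orbit ℤ W).Finite) (hinf : ((Set.univ : Set ℤ) +ᵥ W).Infinite) :
    r ^ k < (AddAction.stabilizer ℤ W).index * Nat.card A ^ 2 := by
  have hwords (d : ℤ) : (words (r ^ k) (d +ᵥ W)).encard ≤ ENat.card A ^ 2 :=
    (Set.encard_le_encard (Set.image_mono (Set.vadd_set_mono hW))).trans
      (encard_words_vadd_image_substActPow_le θ r τ k X d)
  have hinv (t : ℤ) : t +ᵥ ((Set.univ : Set ℤ) +ᵥ W) = (Set.univ : Set ℤ) +ᵥ W := by
    rw [← vadd_assoc, Set.vadd_set_univ]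
  have hlt := (natCast_lt_encard_words hinv hinf (r ^ k)).trans_le
    (encard_words_univ_vadd_le hfin hwords)
  rw [ENat.card_eq_coe_natCard] at hlt
  exact_mod_cast hlt

/-! ### Cyclic minimal partitions -/

namespace IsCyclicMinPartition

variable {Y : Set (ℤ → B)} {n m : ℕ} {P : ZMod m → Set (ℤ → B)}

theorem vadd_eq (hP : IsCyclicMinPartition Y n m P) (t : ℤ) (i : ZMod m) :
    t +ᵥ P i = P (i + t) := by
  have hone (i : ZMod m) : (1 : ℤ) +ᵥ P i = P (i + 1) := hP.2.2.2.2.1 i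
  induction t using Int.induction_on with
  | zero => simp
  | succ k ih => rw [add_comm, add_vadd, ih, hone]; push_cast; ring_nf
  | pred k ih =>
    rw [← vadd_left_cancel_iff (1 : ℤ), vadd_vadd, add_sub_cancel, ih, hone]; push_cast; ring_nf

theorem stabilizer_eq (hP : IsCyclicMinPartition Y n m P) (i : ZMod m) :
    AddAction.stabilizer ℤ (P i) = AddSubgroup.zmultiples (m : ℤ) := by
  have hinj : Function.Injective P := fun a b hab => by
    by_contra hne
    have hdisj : Disjoint (P a) (P b) := hP.2.2.1 hne
    rw [← hab, disjoint_self] at hdisj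
    exact (hP.2.2.2.2.2 a).1.ne_empty hdisj
  ext t
  rw [AddAction.mem_stabilizer_iff, hP.vadd_eq, hinj.eq_iff, add_eq_left,
    ZMod.intCast_zmod_eq_zero_iff_dvd, Int.mem_zmultiples_iff]

theorem minimal_part (hP : IsCyclicMinPartition Y n m P) (i : ZMod m) :
    Minimal (IsClosedInvariant (AddSubgroup.zmultiples (n : ℤ))) (P i) := by
  obtain ⟨-, hclosed, -, -, -, hmin⟩ := hP
  obtain ⟨hne, hinv, hdense⟩ := hmin i
  refine ⟨⟨hne, hclosed i, ?_⟩, fun V hV hVP => ?_⟩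
  · rintro _ ⟨t, rfl⟩ y hy
    have hy' := hinv y hy t
    rwa [mul_comm] at hy'
  · obtain ⟨v, hv⟩ := hV.nonempty
    refine (hdense v (hVP hv)).trans (closure_minimal ?_ hV.isClosed)
    rintro _ ⟨t, rfl⟩
    exact hV.vadd_mem _ (Int.mem_zmultiples_iff.2 (dvd_mul_right _ t)) v hv

theorem minimal (hP : IsCyclicMinPartition Y n m P) :
    Minimal (IsClosedInvariant (⊤ : AddSubgroup ℤ)) Y := by
  have : NeZero m := ⟨hP.1.ne'⟩
  obtain ⟨hclosed, hunion⟩ := And.intro hP.2.1 hP.2.2.2.1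
  have hsub (i : ZMod m) : P i ⊆ Y := hunion ▸ Set.subset_iUnion P i
  refine ⟨⟨(hP.minimal_part 0).prop.nonempty.mono (hsub 0),
    hunion ▸ isClosed_iUnion_of_finite hclosed, fun t _ y hy => ?_⟩, fun V hV hVY => ?_⟩
  · obtain ⟨i, hi⟩ := Set.mem_iUnion.1 (hunion ▸ hy)
    exact hsub _ (hP.vadd_eq t i ▸ Set.vadd_mem_vadd_set hi)
  · obtain ⟨v, hv⟩ := hV.nonempty
    obtain ⟨i, hi⟩ := Set.mem_iUnion.1 (hunion ▸ hVY hv)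
    have hPV : P i ⊆ V :=
      subset_of_minimal_of_inter_nonempty (hP.minimal_part i) (hV.mono le_top) ⟨v, hi, hv⟩
    rw [← hunion]
    refine Set.iUnion_subset fun j => ?_
    obtain ⟨t, ht⟩ := ZMod.intCast_surjective (j - i)
    have hj : P j = t +ᵥ P i := by rw [hP.vadd_eq, ht, add_sub_cancel]
    rw [hj]
    rintro _ ⟨y, hy, rfl⟩
    exact hV.vadd_mem t (AddSubgroup.mem_top t) y (hPV hy)

end IsCyclicMinPartition

theorem exists_isBlock_stabilizer_le [Finite A] {θ : A → ℕ → A} {r : ℕ} (hr : 0 < r) {x : ℤ → A}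
    (hx : IsSubstPeriodicPt θ r x) (τ : A → B)
    (hmin : Minimal (IsClosedInvariant (⊤ : AddSubgroup ℤ)) (codeMap τ '' orbitClosure x))
    (hinf : (codeMap τ '' orbitClosure x).Infinite) (n : ℕ) :
    ∃ W : Set (ℤ → B), IsClosed W ∧ AddAction.IsBlock ℤ W ∧ (AddAction.orbit ℤ W).Finite ∧
      AddAction.stabilizer ℤ W ≤ AddSubgroup.zmultiples ((r ^ n : ℕ) : ℤ) ∧
      (Set.univ : Set ℤ) +ᵥ W = codeMap τ '' orbitClosure x := by
  obtain ⟨k, hk, hxk⟩ := hx.exists_le hr (n + Nat.card A ^ 2)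
  have hX := isClosedInvariant_orbitClosure x
  obtain ⟨W, hWsub, hW⟩ :=
    (isClosedInvariant_image_codeMap_substActPow θ hr τ k hX).exists_minimal_subset
      (isCompact_image_codeMap_substActPow θ r τ k hX.isClosed)
  have hindex : (AddAction.stabilizer ℤ W).index ∣ r ^ k := by
    simpa only [Int.index_zmultiples, Int.natAbs_natCast] using
      AddSubgroup.index_dvd_of_le hW.prop.le_stabilizer
  have hfin : (AddAction.orbit ℤ W).Finite := by
    refine Set.finite_of_ncard_ne_zero ?_
    rw [← AddAction.index_stabilizer]
    exact ne_zero_of_dvd_ne_zero (by positivity) hindex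
  have hcover : (Set.univ : Set ℤ) +ᵥ W = codeMap τ '' orbitClosure x :=
    univ_vadd_eq_of_minimal hmin
      (hWsub.trans (Set.image_mono (mapsTo_substActPow_orbitClosure hr hxk).image_subset))
      hW.prop.isClosed hW.prop.nonempty hfin
  have hlt : r ^ k < (AddAction.stabilizer ℤ W).index * Nat.card A ^ 2 :=
    pow_lt_index_stabilizer_mul_card_sq hWsub hfin (hcover ▸ hinf)
  exact ⟨W, hW.prop.isClosed, isBlock_of_minimal hW, hfin,
    le_zmultiples_of_dvd_index (pow_dvd_of_pow_lt_mul hr hindex hlt hk), hcover⟩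

theorem stmt_1_general [Finite A] (θ : A → ℕ → A) (r : ℕ) (hr : 0 < r) (X : Set (ℤ → A))
    (hX : IsSubstShift θ r X) (τ : A → B) (Y : Set (ℤ → B)) (hY : Y = codeMap τ '' X)
    (hYinf : Y.Infinite) (n m : ℕ) (P : ZMod m → Set (ℤ → B))
    (hP : IsCyclicMinPartition Y (r ^ n) m P) : m = r ^ n := by
  obtain ⟨x, hx, rfl⟩ := hX
  subst hY
  refine Nat.dvd_antisymm ?_ ?_
  · have hle := (hP.minimal_part 0).prop.le_stabilizer
    rw [hP.stabilizer_eq] at hle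
    exact zmultiples_natCast_le_zmultiples_natCast_iff.1 hle
  · obtain ⟨W, hWclosed, hblock, hfin, hstab, hcover⟩ :=
      exists_isBlock_stabilizer_le hr hx τ hP.minimal hYinf n
    have hPW : P 0 ⊆ (Set.univ : Set ℤ) +ᵥ W := by
      rw [hcover, ← hP.2.2.2.1]
      exact Set.subset_iUnion P 0
    have hle := stabilizer_le_of_minimal_of_isBlock (hP.minimal_part 0) hWclosed hblock hfin hstab
      hPW
    rw [hP.stabilizer_eq] at hle
    exact zmultiples_natCast_le_zmultiples_natCast_iff.1 hle

end Shift

/-- for an infinite primitive `r`-automatic shift `Y`, every cyclic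
`σ^{r^n}`-minimal partition of `Y` has exactly `r^n` members, i.e. `γ(r^n) = r^n`. -/
theorem stmt_1 {A B : Type*} [Fintype A] [Fintype B]
    (θ : A → ℕ → A) (r : ℕ) (hr : 2 ≤ r) (hθ : SubstPrimitive θ r)
    (X : Set (ℤ → A)) (hX : IsSubstShift θ r X)
    (τ : A → B) (Y : Set (ℤ → B)) (hY : Y = codeMap τ '' X) (hYinf : Y.Infinite) :
    ∀ n m : ℕ, ∀ P : ZMod m → Set (ℤ → B),
      IsCyclicMinPartition Y (r ^ n) m P → m = r ^ n := by
  exact fun n m P hP => stmt_1_general θ r (by omega) X hX τ Y hY hYinf n m P hP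
end

section
/- Let θ be a pair-aperiodic substitution of constant length r on a finite alphabet 𝒜 and let (a,b) be an asymptotic disjoint pair. Then there exists a periodic pair (a',b') such that for every k ≥ 2|𝒜|² and every pair (c,d) that is reachable from (a',b'), the pair (c,d) is k-reachable from (a,b). -/
open scoped Classical

/-!
Reading base-`r` digits makes the pairs of letters the states of a finite automaton, in which
`k`-reachability is evaluation along a word of length `k`. By pumping, a word of length `|𝒜|²` that
separates `a` from `b` passes through a cycle; the letters of a pair on this cycle are distinct,
since equal letters would never separate again. Pair-aperiodicity turns the cycle into a loop of
length one, so any surplus of `k` can be spent on it: reaching the loop from `(a, b)` and reaching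
`(c, d)` from it cost fewer than `|𝒜|²` steps each.
-/

section PairReachability

variable {A : Type*} {θ : A → ℕ → A} {r k m n : ℕ} {a b c d e f : A}

/-- The automaton of the columns of `θ` acting on pairs of letters: the letter `j` sends `(x, y)` to
`(θ_j(x), θ_j(y))`. Words are base-`r` expansions, most significant digit first, and the word of a
position `j < r ^ k` is accepted if `θ^k(s.1)` and `θ^k(s.2)` differ there. -/
def pairDFA (θ : A → ℕ → A) (r : ℕ) (s : A × A) : DFA (Fin r) (A × A) where
  step p j := (θ p.1 j, θ p.2 j)
  start := s
  accept := {p | p.1 ≠ p.2}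

theorem pairReachable_zero : PairReachable θ r 0 a b c d ↔ a = c ∧ b = d := by
  simp [PairReachable, substPow]

theorem pairReachable_succ :
    PairReachable θ r (k + 1) a b c d ↔
      ∃ e f, PairReachable θ r k a b e f ∧ ∃ i < r, θ e i = c ∧ θ f i = d := by
  constructor
  · rintro ⟨j, hj, hc, hd⟩
    have hr : 0 < r := Nat.pos_of_ne_zero fun h => by simp [h] at hj
    exact ⟨_, _, ⟨j / r, Nat.div_lt_of_lt_mul (pow_succ' r k ▸ hj), rfl, rfl⟩,
      j % r, Nat.mod_lt j hr, hc, hd⟩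
  · rintro ⟨_, _, ⟨j, hj, rfl, rfl⟩, i, hi, hc, hd⟩
    have hr : 0 < r := i.zero_le.trans_lt hi
    have hdiv : (r * j + i) / r = j := by
      rw [Nat.mul_add_div hr, Nat.div_eq_of_lt hi, add_zero]
    have hmod : (r * j + i) % r = i := by rw [Nat.mul_add_mod, Nat.mod_eq_of_lt hi]
    have hlt : r * j + i < r ^ (k + 1) :=
      calc r * j + i < r * (j + 1) := by rw [mul_add_one]; gcongr
        _ ≤ r ^ (k + 1) := by rw [pow_succ']; gcongr; exact hj
    exact ⟨r * j + i, hlt, by simpa [substPow, hdiv, hmod] using ⟨hc, hd⟩⟩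

theorem pairReachable_iff_exists_evalFrom (s : A × A) :
    PairReachable θ r k a b c d ↔
      ∃ w : List (Fin r), w.length = k ∧ (pairDFA θ r s).evalFrom (a, b) w = (c, d) := by
  induction k generalizing c d with
  | zero => simp [pairReachable_zero, List.length_eq_zero_iff]
  | succ k ih =>
    rw [pairReachable_succ]
    constructor
    · rintro ⟨e, f, hef, i, hi, rfl, rfl⟩
      obtain ⟨w, rfl, hw⟩ := ih.1 hef
      exact ⟨w ++ [⟨i, hi⟩], by simp, by rw [DFA.evalFrom_append_singleton, hw]; rfl⟩
    · rintro ⟨w, hlen, hw⟩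
      obtain rfl | ⟨u, i, rfl⟩ := w.eq_nil_or_concat'
      · simp at hlen
      rw [DFA.evalFrom_append_singleton] at hw
      exact ⟨_, _, ih.2 ⟨u, by simpa using hlen, rfl⟩, i, i.2, Prod.ext_iff.1 hw⟩

namespace PairReachable

theorem trans (hm : PairReachable θ r m a b c d) (hn : PairReachable θ r n c d e f) :
    PairReachable θ r (m + n) a b e f := by
  rw [pairReachable_iff_exists_evalFrom (a, b)] at *
  obtain ⟨u, rfl, hu⟩ := hm
  obtain ⟨v, rfl, hv⟩ := hn
  exact ⟨u ++ v, List.length_append, by rw [DFA.evalFrom_of_append, hu, hv]⟩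

theorem ne_of_ne (h : PairReachable θ r k a b c d) (hcd : c ≠ d) : a ≠ b := by
  rintro rfl
  obtain ⟨j, -, hc, hd⟩ := h
  exact hcd (hc.symm.trans hd)

theorem iterate (h : PairReachable θ r 1 a b a b) (k : ℕ) : PairReachable θ r k a b a b := by
  induction k with
  | zero => exact pairReachable_zero.2 ⟨rfl, rfl⟩
  | succ k ih => exact ih.trans h

theorem exists_cycle [Fintype A] (h : PairReachable θ r k a b c d)
    (hk : Fintype.card A ^ 2 ≤ k) :
    ∃ e f l m n, l + m + n = k ∧ l + m ≤ Fintype.card A ^ 2 ∧ 0 < m ∧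
      PairReachable θ r l a b e f ∧ PairReachable θ r m e f e f ∧
        PairReachable θ r n e f c d := by
  have hcard : Fintype.card (A × A) = Fintype.card A ^ 2 := by rw [Fintype.card_prod, sq]
  obtain ⟨w, rfl, hw⟩ := (pairReachable_iff_exists_evalFrom (a, b)).1 h
  obtain ⟨⟨e, f⟩, x, y, z, rfl, hxy, hy, hx, hcycle, hz⟩ :=
    DFA.evalFrom_split _ (hcard.trans_le hk) hw
  exact ⟨e, f, x.length, y.length, z.length, by simp only [List.length_append],
    hxy.trans_eq hcard, List.length_pos_iff.2 hy,
    (pairReachable_iff_exists_evalFrom _).2 ⟨x, rfl, hx⟩,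
    (pairReachable_iff_exists_evalFrom _).2 ⟨y, rfl, hcycle⟩,
    (pairReachable_iff_exists_evalFrom _).2 ⟨z, rfl, hz⟩⟩

theorem exists_lt_card_sq [Fintype A] (h : PairReachable θ r k a b c d) :
    ∃ m < Fintype.card A ^ 2, PairReachable θ r m a b c d := by
  induction k using Nat.strong_induction_on with
  | _ k ih =>
    rcases lt_or_ge k (Fintype.card A ^ 2) with hk | hk
    · exact ⟨k, hk, h⟩
    · obtain ⟨e, f, l, m, n, hsum, -, hm, hto, -, hfrom⟩ := h.exists_cycle hk
      exact ih (l + n) (by lia) (hto.trans hfrom)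

end PairReachable

theorem AsympDisjointPair.exists_pairReachable_isPeriodicPair [Fintype A]
    (h : AsympDisjointPair θ r a b) :
    ∃ a' b', IsPeriodicPair θ r a' b' ∧
      ∃ l < Fintype.card A ^ 2, PairReachable θ r l a b a' b' := by
  have hpos : 0 < Fintype.card A ^ 2 := pow_pos (Fintype.card_pos_iff.2 ⟨a⟩) 2
  obtain ⟨j, hj, hne⟩ := h _ hpos
  have hreach : PairReachable θ r (Fintype.card A ^ 2) a b _ _ := ⟨j, hj, rfl, rfl⟩
  obtain ⟨a', b', l, m, n, -, hlm, hm, hto, hcycle, hfrom⟩ := hreach.exists_cycle le_rfl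
  exact ⟨a', b', ⟨hfrom.ne_of_ne hne, m, hm, hcycle⟩, l, by lia, hto⟩

theorem PairAperiodic.pairReachable_self (hap : PairAperiodic θ r) (h : IsPeriodicPair θ r a b)
    (k : ℕ) : PairReachable θ r k a b a b :=
  PairReachable.iterate (pairReachable_succ.2
    ⟨a, b, pairReachable_zero.2 ⟨rfl, rfl⟩, hap a b h⟩) k

end PairReachability

/-- for a pair-aperiodic substitution and an asymptotic disjoint pair `(a,b)`,
there is a periodic pair `(a',b')` such that every pair reachable from `(a',b')` is
`k`-reachable from `(a,b)` for every `k ≥ 2|𝒜|²`. -/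
theorem stmt_6 {A : Type*} [Fintype A] (θ : A → ℕ → A) (r : ℕ) (hr : 2 ≤ r)
    (hap : PairAperiodic θ r) (a b : A) (hab : AsympDisjointPair θ r a b) :
    ∃ a' b' : A, IsPeriodicPair θ r a' b' ∧
      ∀ k : ℕ, 2 * Fintype.card A ^ 2 ≤ k →
        ∀ c d : A, (∃ k' : ℕ, PairReachable θ r k' a' b' c d) →
          PairReachable θ r k a b c d := by
  obtain ⟨a', b', hper, l, hl, hto⟩ := hab.exists_pairReachable_isPeriodicPair
  refine ⟨a', b', hper, fun k hk c d ⟨_, hreach⟩ => ?_⟩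
  obtain ⟨m, hm, hfrom⟩ := hreach.exists_lt_card_sq
  have hlength : l + (k - l - m) + m = k := by lia
  exact hlength ▸ (hto.trans (hap.pairReachable_self hper (k - l - m))).trans hfrom
end
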